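/- Consider Signal Temporal Logic (STL) formulas over signals w : ℝ → (Fin d → ℝ), generated by the grammar φ ::= α | ⊥ | ¬φ | φ₁ ∧ φ₂ | □_{[a,b]} φ, where each atomic proposition α is given by a function f : (ℝ → (Fin d → ℝ)) → ℝ and means f(w) > 0, and each temporal interval [a, b] is a nonempty compact interval (a ≤ b). Define the Boolean semantics by: w ⊨ α iff f(w) > 0; w ⊨ ⊥ never; w ⊨ ¬φ iff not w ⊨ φ; w ⊨ φ₁ ∧ φ₂ iff w ⊨ φ₁ and w ⊨ φ₂; w ⊨ □_{[a,b]} φ iff for all t ∈ [a, b], w^t ⊨ φ, where w^t(s) = w(t + s). Define the quantitative robustness ρ(w, φ) by: ρ(w, α) = f(w); ρ(w, ⊥) = −∞ (working in extended reals, or assuming all infima below are attained: for each □_{[a,b]} φ subformula, assume there exists t* ∈ [a, b] with ρ(w^{t*}, φ) = inf_{t ∈ [a,b]} ρ(w^t, φ)); ρ(w, ¬φ) = −ρ(w, φ); ρ(w, φ₁ ∧ φ₂) = min(ρ(w, φ₁), ρ(w, φ₂)); ρ(w, □_{[a,b]} φ) = inf_{t ∈ [a,b]} ρ(w^t, φ).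 Then robustness is sound with respect to the Boolean semantics: for every formula φ and every signal w, if ρ(w, φ) > 0 then w ⊨ φ, and if ρ(w, φ) < 0 then w does not satisfy φ. -/

import Mathlib

/-- STL formulas over signals `ℝ → (Fin d → ℝ)`: atomic propositions given by a
map `f` (meaning `f w > 0`), falsum, negation, conjunction, and the always
operator over a nonempty compact interval `[a, b]` (with `a ≤ b`). -/
inductive STL (d : ℕ) : Type where
  | atom (f : (ℝ → Fin d → ℝ) → ℝ)
  | falsum
  | not (φ : STL d)
  | and (φ₁ φ₂ : STL d)
  | always (a b : ℝ) (hab : a ≤ b) (φ : STL d)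

/-- The shifted signal `w^t`, defined by `w^t(s) = w (t + s)`. -/
def shift {d : ℕ} (w : ℝ → Fin d → ℝ) (t : ℝ) : ℝ → Fin d → ℝ :=
  fun s => w (t + s)

/-- Boolean satisfaction semantics of STL. -/
def Sat {d : ℕ} : (ℝ → Fin d → ℝ) → STL d → Prop
  | w, .atom f => 0 < f w
  | _, .falsum => False
  | w, .not φ => ¬ Sat w φ
  | w, .and φ₁ φ₂ => Sat w φ₁ ∧ Sat w φ₂
  | w, .always a b _ φ => ∀ t ∈ Set.Icc a b, Sat (shift w t) φ

/-- Quantitative robustness semantics of STL, valued in the extended reals. -/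
noncomputable def rho {d : ℕ} : (ℝ → Fin d → ℝ) → STL d → EReal
  | w, .atom f => (f w : EReal)
  | _, .falsum => ⊥
  | w, .not φ => -rho w φ
  | w, .and φ₁ φ₂ => min (rho w φ₁) (rho w φ₂)
  | w, .always a b _ φ => ⨅ t : Set.Icc a b, rho (shift w t) φ

/-- Soundness of STL robustness with respect to Boolean satisfaction:
positive robustness implies satisfaction, negative robustness implies
non-satisfaction. -/
theorem stl_robustness_sound {d : ℕ} (φ : STL d) (w : ℝ → Fin d → ℝ) :
    (0 < rho w φ → Sat w φ) ∧ (rho w φ < 0 → ¬ Sat w φ) := by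
  induction φ generalizing w with
  | atom f =>
    simp only [rho, Sat]
    refine ⟨fun h => by exact_mod_cast h, fun h => ?_⟩
    have h' : f w < 0 := by exact_mod_cast h
    exact not_lt.mpr h'.le
  | falsum => simp [rho, Sat]
  | not φ ih =>
    simp only [rho, Sat]
    refine ⟨fun h => (ih w).2 ?_, fun h => not_not.mpr ((ih w).1 ?_)⟩
    · have := EReal.neg_lt_neg_iff.mpr h
      simpa using this
    · have := EReal.neg_lt_neg_iff.mpr h
      simpa using this
  | and φ₁ φ₂ ih₁ ih₂ =>
    simp only [rho, Sat]
    refine ⟨fun h => ?_, fun h hs => ?_⟩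
    · exact ⟨(ih₁ w).1 (lt_min_iff.mp h).1, (ih₂ w).1 (lt_min_iff.mp h).2⟩
    · rcases min_lt_iff.mp h with h | h
      · exact (ih₁ w).2 h hs.1
      · exact (ih₂ w).2 h hs.2
  | always a b hab φ ih =>
    simp only [rho, Sat]
    refine ⟨fun h t ht => ?_, fun h hs => ?_⟩
    · exact (ih (shift w t)).1
        (lt_of_lt_of_le h (iInf_le (fun t : Set.Icc a b => rho (shift w t) φ) ⟨t, ht⟩))
    · obtain ⟨t, ht⟩ := iInf_lt_iff.mp h
      exact (ih (shift w t)).2 ht (hs t t.2)
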